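/- Let f : 𝔹 → 𝔹 be regular (f(q) = ∑_{n≥0} qⁿaₙ converging on 𝔹, with f(𝔹) ⊆ 𝔹) and suppose f is a bijection of 𝔹 onto 𝔹. Then f is a regular Moebius transformation: there exist a ∈ ℍ with |a| < 1 and u ∈ ℍ with |u| = 1 such that for all q ∈ 𝔹, f(q) = (1 − q·conj(a))^{-*} * (q − a)·u, i.e. f(q) = (|a|²q² − 2Re(a)q + 1)⁻¹ · (−q²a + q(1 + a²) − a) · u. -/

import Mathlib

open Quaternion

/-!
Let `c` be the coefficients of the bijection `f`. If `v * q = z * v` with `z` complex, then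
`v * f q = ∑ zⁿ * v * c n`, and the right-hand side is the value at `v` of an operator `A z`
depending holomorphically on `z`, linear over `ℂ` acting on `ℍ` by left multiplication. So `A z`
acts on every vector as the right multiplication by a value of `f`, and the Schwarz-Pick transform
`B` of `A` with `B a = 0`, for `a` real, is contractive. Injectivity gives an `a` at which the
derivative of `A` is nonzero, and makes `B z` invertible for `z ≠ a`.

The maximum principle for the inverse of `A` is a minimum principle for regular functions. It makes
`f` proper, so that `B z` is asymptotically isometric at the unit circle. Dividing `B` by the disc
automorphism vanishing at `a` leaves a holomorphic function which is contractive together with its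
inverse, hence a constant isometry. Up to a real factor this isometry is the derivative of `B`
at `a`, a limit of right multiplications since `A` takes such values on the real axis. This leaves
a linear equation for `f q`, whose solution is a regular Moebius transformation.
-/

open Filter Metric Set Topology ComplexConjugate

section UnitSphereFilter

/-- The filter of points of the open unit ball tending to the unit sphere. -/
def toUnitSphere (E : Type*) [Norm E] : Filter E :=
  comap norm (𝓝[<] 1)

theorem eventually_toUnitSphere {E : Type*} [Norm E] {p : E → Prop} :
    (∀ᶠ x in toUnitSphere E, p x) ↔ ∀ᶠ r in 𝓝[<] (1 : ℝ), ∀ x, ‖x‖ = r → p x :=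
  eventually_comap

theorem eventually_norm_mem_Ioo_toUnitSphere {E : Type*} [Norm E] {s : ℝ} (hs : s < 1) :
    ∀ᶠ x in toUnitSphere E, ‖x‖ ∈ Ioo s 1 :=
  preimage_mem_comap (Ioo_mem_nhdsLT hs)

theorem norm_le_of_eventually_toUnitSphere {E : Type*} [NormedAddCommGroup E] [NormedSpace ℂ E]
    {g : ℂ → E} {C : ℝ} (hg : DifferentiableOn ℂ g (ball 0 1))
    (hC : ∀ C' > C, ∀ᶠ z in toUnitSphere ℂ, ‖g z‖ ≤ C') {z : ℂ} (hz : z ∈ ball 0 1) :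
    ‖g z‖ ≤ C := by
  refine le_of_forall_gt_imp_ge_of_dense fun C' hC' => ?_
  have hz : ‖z‖ < 1 := by simpa using hz
  obtain ⟨r, hr, hzr, hr1⟩ :=
    ((eventually_toUnitSphere.1 (hC C' hC')).and (Ioo_mem_nhdsLT hz)).exists
  have hr0 : r ≠ 0 := ((norm_nonneg z).trans_lt hzr).ne'
  refine Complex.norm_le_of_forall_mem_frontier_norm_le isBounded_ball
    (hg.diffContOnCl_ball (closedBall_subset_ball hr1)) (fun y hy => hr y ?_)
    (subset_closure (mem_ball_zero_iff.2 hzr))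
  simpa [frontier_ball _ hr0] using hy

end UnitSphereFilter

section NormIdentities

theorem coeComplex_sub (z w : ℂ) : ((z - w : ℂ) : ℍ[ℝ]) = z - w :=
  map_sub ofComplex z w

theorem coeComplex_pow (z : ℂ) (n : ℕ) : ((z ^ n : ℂ) : ℍ[ℝ]) = z ^ n :=
  map_pow ofComplex z n

theorem norm_coeComplex (z : ℂ) : ‖(z : ℍ[ℝ])‖ = ‖z‖ := by
  rw [← sq_eq_sq₀ (norm_nonneg _) (norm_nonneg _), sq, ← normSq_eq_norm_mul_self,
    Complex.sq_norm, normSq_def', Complex.normSq_apply]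
  simp only [re_coeComplex, imI_coeComplex, imJ_coeComplex, imK_coeComplex]
  ring

theorem sq_norm_one_sub_mul_star (p w : ℍ[ℝ]) :
    ‖1 - p * star w‖ ^ 2 = ‖p - w‖ ^ 2 + (1 - ‖p‖ ^ 2) * (1 - ‖w‖ ^ 2) := by
  simp only [sq, ← normSq_eq_norm_mul_self, normSq_def']
  simp only [re_sub, re_one, re_mul, re_star, imI_star, mul_neg, sub_neg_eq_add, imJ_star, imK_star,
    imI_sub, imI_one, imI_mul, zero_sub, neg_add_rev, neg_neg, imJ_sub, imJ_one, imJ_mul, imK_sub,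
    imK_one, imK_mul]
  ring

theorem norm_sub_lt_norm_one_sub_mul_star {p w : ℍ[ℝ]} (hp : ‖p‖ < 1) (hw : ‖w‖ < 1) :
    ‖p - w‖ < ‖1 - p * star w‖ := by
  refine lt_of_pow_lt_pow_left₀ 2 (norm_nonneg _) ?_
  have hp2 : 0 < 1 - ‖p‖ ^ 2 := by nlinarith [norm_nonneg p]
  have hw2 : 0 < 1 - ‖w‖ ^ 2 := by nlinarith [norm_nonneg w]
  linarith [sq_norm_one_sub_mul_star p w, mul_pos hp2 hw2]

theorem one_sub_mul_star_ne_zero {p w : ℍ[ℝ]} (hp : ‖p‖ < 1) (hw : ‖w‖ < 1) :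
    1 - p * star w ≠ 0 :=
  norm_pos_iff.1 ((norm_nonneg _).trans_lt (norm_sub_lt_norm_one_sub_mul_star hp hw))

theorem eventually_norm_one_sub_mul_star_le {w : ℍ[ℝ]} (hw : ‖w‖ < 1) {C : ℝ} (hC : 1 < C) :
    ∀ᶠ p in toUnitSphere ℍ[ℝ], ‖1 - p * star w‖ ≤ C * ‖p - w‖ := by
  have hcont : ∀ᶠ r in 𝓝[<] (1 : ℝ),
      (1 - r ^ 2) * (1 - ‖w‖ ^ 2) < (C ^ 2 - 1) * (r - ‖w‖) ^ 2 := by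
    refine nhdsWithin_le_nhds (ContinuousAt.eventually_lt (by fun_prop) (by fun_prop) ?_)
    have hpos : 0 < (C ^ 2 - 1) * (1 - ‖w‖) ^ 2 :=
      mul_pos (by nlinarith) (pow_pos (sub_pos.2 hw) 2)
    simpa using hpos
  filter_upwards [preimage_mem_comap hcont, eventually_norm_mem_Ioo_toUnitSphere hw]
    with p hp hwp
  have hdist : (‖p‖ - ‖w‖) ^ 2 ≤ ‖p - w‖ ^ 2 :=
    pow_le_pow_left₀ (sub_nonneg.2 hwp.1.le) (norm_sub_norm_le p w) 2
  refine le_of_sq_le_sq ?_ (by positivity)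
  calc ‖1 - p * star w‖ ^ 2
      = ‖p - w‖ ^ 2 + (1 - ‖p‖ ^ 2) * (1 - ‖w‖ ^ 2) := sq_norm_one_sub_mul_star p w
    _ ≤ ‖p - w‖ ^ 2 + (C ^ 2 - 1) * (‖p‖ - ‖w‖) ^ 2 := by
        have hp : (1 - ‖p‖ ^ 2) * (1 - ‖w‖ ^ 2) < (C ^ 2 - 1) * (‖p‖ - ‖w‖) ^ 2 := hp
        linarith
    _ ≤ ‖p - w‖ ^ 2 + (C ^ 2 - 1) * ‖p - w‖ ^ 2 := by
        gcongr
        nlinarith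
    _ = (C * ‖p - w‖) ^ 2 := by ring

variable {a z : ℂ}

theorem coeComplex_one_sub_conj_mul (a z : ℂ) :
    ((1 - conj a * z : ℂ) : ℍ[ℝ]) = 1 - (z : ℍ[ℝ]) * star (a : ℍ[ℝ]) := by
  ext <;> simp <;> ring

theorem norm_sub_lt_norm_one_sub_conj_mul (ha : ‖a‖ < 1) (hz : ‖z‖ < 1) :
    ‖z - a‖ < ‖1 - conj a * z‖ := by
  simpa only [← coeComplex_one_sub_conj_mul, ← coeComplex_sub, norm_coeComplex] using
    norm_sub_lt_norm_one_sub_mul_star (p := (z : ℍ[ℝ])) (w := a)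
      ((norm_coeComplex z).trans_lt hz) ((norm_coeComplex a).trans_lt ha)

theorem one_sub_conj_mul_ne_zero (ha : ‖a‖ < 1) (hz : ‖z‖ < 1) : 1 - conj a * z ≠ 0 :=
  norm_pos_iff.1 ((norm_nonneg _).trans_lt (norm_sub_lt_norm_one_sub_conj_mul ha hz))

theorem eventually_norm_one_sub_conj_mul_le (ha : ‖a‖ < 1) {C : ℝ} (hC : 1 < C) :
    ∀ᶠ z in toUnitSphere ℂ, ‖1 - conj a * z‖ ≤ C * ‖z - a‖ := by
  have h := eventually_toUnitSphere.1
    (eventually_norm_one_sub_mul_star_le ((norm_coeComplex a).trans_lt ha) hC)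
  refine eventually_toUnitSphere.2 (h.mono fun r hr z hz => ?_)
  simpa only [← coeComplex_one_sub_conj_mul, ← coeComplex_sub, norm_coeComplex] using
    hr z ((norm_coeComplex z).trans hz)

end NormIdentities

section RingInverse

theorem inverse_mul_inverse {R : Type*} [MonoidWithZero R] {S T : R} (hS : IsUnit S)
    (hT : IsUnit T) : Ring.inverse (S * Ring.inverse T) = T * Ring.inverse S := by
  lift S to Rˣ using hS
  lift T to Rˣ using hT
  simp only [Ring.inverse_unit, ← Units.val_mul, mul_inv_rev, inv_inv]

theorem sub_smul_inverse_eq {𝕜 R : Type*} [CommSemiring 𝕜] [Semiring R] [Algebra 𝕜 R]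
    {B H : R} {s t : 𝕜} (hB : IsUnit B) (hH : IsUnit H)
    (h : s • H = t • B) : s • Ring.inverse B = t • Ring.inverse H := by
  calc s • Ring.inverse B = Ring.inverse H * (s • H) * Ring.inverse B := by
        rw [mul_smul_comm, Ring.inverse_mul_cancel H hH, smul_mul_assoc, one_mul]
    _ = t • Ring.inverse H := by
        rw [h, mul_smul_comm, smul_mul_assoc, mul_assoc, Ring.mul_inverse_cancel B hB, mul_one]

end RingInverse

section OperatorInverse

variable {𝕜 E : Type*} [NontriviallyNormedField 𝕜] [NormedAddCommGroup E] [NormedSpace 𝕜 E]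

theorem isUnit_of_forall_apply_eq_zero [CompleteSpace 𝕜] [FiniteDimensional 𝕜 E] {T : E →L[𝕜] E}
    (hT : ∀ v, T v = 0 → v = 0) : IsUnit T := by
  have := FiniteDimensional.complete 𝕜 E
  have hinj : Function.Injective (T : E →ₗ[𝕜] E) := (injective_iff_map_eq_zero _).2 hT
  exact ContinuousLinearMap.isUnit_iff_bijective.2
    ⟨hinj, LinearMap.injective_iff_surjective.1 hinj⟩

theorem apply_inverse_apply {T : E →L[𝕜] E} (hT : IsUnit T) (v : E) :
    T (Ring.inverse T v) = v := by
  rw [← mul_apply_eq_comp, Ring.mul_inverse_cancel T hT, one_apply_eq_self]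

theorem inverse_apply_apply {T : E →L[𝕜] E} (hT : IsUnit T) (v : E) :
    Ring.inverse T (T v) = v := by
  rw [← mul_apply_eq_comp, Ring.inverse_mul_cancel T hT, one_apply_eq_self]

theorem opNorm_mul_inverse_le {S T : E →L[𝕜] E} (hT : IsUnit T) {C : ℝ} (hC : 0 ≤ C)
    (h : ∀ v, ‖S v‖ ≤ C * ‖T v‖) : ‖S * Ring.inverse T‖ ≤ C :=
  ContinuousLinearMap.opNorm_le_bound _ hC fun v => by
    simpa only [mul_apply_eq_comp, apply_inverse_apply hT] using h (Ring.inverse T v)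

theorem norm_apply_eq_of_norm_le_one {T : E →L[𝕜] E} (hT : IsUnit T) (hle : ‖T‖ ≤ 1)
    (hinv : ‖Ring.inverse T‖ ≤ 1) (v : E) : ‖T v‖ = ‖v‖ := by
  refine le_antisymm (by simpa using T.le_of_opNorm_le hle v) ?_
  simpa [inverse_apply_apply hT] using (Ring.inverse T).le_of_opNorm_le hinv (T v)

end OperatorInverse

theorem hasSum_clm_apply {ι 𝕜 E F : Type*} [NontriviallyNormedField 𝕜] [NormedAddCommGroup E]
    [NormedSpace 𝕜 E] [NormedAddCommGroup F] [NormedSpace 𝕜 F] {T : ι → E →L[𝕜] F} {S : E →L[𝕜] F}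
    (hT : HasSum T S) (v : E) : HasSum (fun i => T i v) (S v) :=
  (ContinuousLinearMap.apply 𝕜 F v).hasSum hT

section Derivative

variable {E : Type*} [NormedAddCommGroup E] [NormedSpace ℂ E] {φ : ℂ → E}

theorem exists_deriv_ne_zero_of_ne {x y : ℂ} (hφ : ∀ t ∈ segment ℝ x y, DifferentiableAt ℂ φ t)
    (hxy : φ x ≠ φ y) : ∃ t ∈ segment ℝ x y, deriv φ t ≠ 0 := by
  by_contra! hzero
  have hle := (convex_segment x y).norm_image_sub_le_of_norm_deriv_le hφ
    (fun t ht => (norm_eq_zero.2 (hzero t ht)).le) (left_mem_segment ℝ x y)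
    (right_mem_segment ℝ x y)
  rw [zero_mul, norm_le_zero_iff, sub_eq_zero] at hle
  exact hxy hle.symm

theorem deriv_mem_of_eventually_slope_ofReal_mem {a : ℝ} {S : Set E} (hφ : DifferentiableAt ℂ φ a)
    (hS : IsClosed S) (hslope : ∀ᶠ x : ℝ in 𝓝[≠] a, slope φ a x ∈ S) : deriv φ a ∈ S := by
  have hofReal : Tendsto ((↑) : ℝ → ℂ) (𝓝[≠] a) (𝓝[≠] (a : ℂ)) :=
    Complex.continuous_ofReal.continuousWithinAt.tendsto_nhdsWithin fun x hx =>
      Complex.ofReal_injective.ne hx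
  exact hS.mem_of_tendsto ((hasDerivAt_iff_tendsto_slope.1 hφ.hasDerivAt).comp hofReal) hslope

end Derivative

/-! ### Rigidity in the Schwarz lemma -/

section BlaschkeQuotient

/-- The quotient of `B - B a` by the disc automorphism `z ↦ (z - a) / (1 - conj a * z)`, extended
analytically to `a`. -/
noncomputable def blaschkeQuotient {E : Type*} [NormedAddCommGroup E] [NormedSpace ℂ E]
    (B : ℂ → E) (a z : ℂ) : E :=
  (1 - conj a * z) • dslope B a z

section NormedSpace

variable {E : Type*} [NormedAddCommGroup E] [NormedSpace ℂ E] {B : ℂ → E} {a : ℂ}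

theorem sub_smul_blaschkeQuotient (hBa : B a = 0) (z : ℂ) :
    (z - a) • blaschkeQuotient B a z = (1 - conj a * z) • B z := by
  rw [blaschkeQuotient, smul_comm, sub_smul_dslope, hBa, sub_zero]

theorem blaschkeQuotient_self : blaschkeQuotient B a a = (1 - conj a * a) • deriv B a := by
  rw [blaschkeQuotient, dslope_same]

theorem differentiableOn_blaschkeQuotient [CompleteSpace E]
    (hB : DifferentiableOn ℂ B (ball 0 1)) (ha : a ∈ ball 0 1) :
    DifferentiableOn ℂ (blaschkeQuotient B a) (ball 0 1) :=
  DifferentiableOn.smul (by fun_prop)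
    ((Complex.differentiableOn_dslope (isOpen_ball.mem_nhds ha)).2 hB)

theorem norm_blaschkeQuotient_le [CompleteSpace E] (hB : DifferentiableOn ℂ B (ball 0 1))
    (ha : a ∈ ball 0 1) (hBa : B a = 0) (hle : ∀ z ∈ ball 0 1, ‖B z‖ ≤ 1) {z : ℂ}
    (hz : z ∈ ball 0 1) : ‖blaschkeQuotient B a z‖ ≤ 1 := by
  have ha1 : ‖a‖ < 1 := by simpa using ha
  refine norm_le_of_eventually_toUnitSphere (differentiableOn_blaschkeQuotient hB ha)
    (fun C hC => ?_) hz
  filter_upwards [eventually_norm_one_sub_conj_mul_le ha1 hC,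
    eventually_norm_mem_Ioo_toUnitSphere ha1] with z hC hz
  have hza : 0 < ‖z - a‖ := norm_pos_iff.2 (sub_ne_zero.2 fun h => hz.1.ne' (congrArg norm h))
  refine le_of_mul_le_mul_left ?_ hza
  calc ‖z - a‖ * ‖blaschkeQuotient B a z‖
      = ‖1 - conj a * z‖ * ‖B z‖ := by
        rw [← norm_smul, sub_smul_blaschkeQuotient hBa, norm_smul]
    _ ≤ ‖1 - conj a * z‖ := mul_le_of_le_one_right (norm_nonneg _) (hle z (by simpa using hz.2))
    _ ≤ ‖z - a‖ * C := hC.trans_eq (mul_comm _ _)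

end NormedSpace

section NormedAlgebra

variable {R : Type*} [NormedRing R] [NormedAlgebra ℂ R] {B : ℂ → R} {a : ℂ}

theorem isUnit_blaschkeQuotient (ha : a ∈ ball 0 1) (hBa : B a = 0)
    (hunit : ∀ z ∈ ball 0 1, z ≠ a → IsUnit (B z)) (hderiv : IsUnit (deriv B a)) {z : ℂ}
    (hz : z ∈ ball 0 1) : IsUnit (blaschkeQuotient B a z) := by
  have hne : 1 - conj a * z ≠ 0 := one_sub_conj_mul_ne_zero (by simpa using ha) (by simpa using hz)
  refine IsUnit.smul (Units.mk0 _ hne) ?_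
  obtain rfl | hza := eq_or_ne z a
  · rwa [dslope_same]
  · rw [dslope_of_ne B hza, slope, hBa, vsub_eq_sub, sub_zero]
    exact (hunit z hz hza).smul (Units.mk0 (z - a)⁻¹ (inv_ne_zero (sub_ne_zero.2 hza)))

theorem norm_inverse_blaschkeQuotient_le [CompleteSpace R]
    (hB : DifferentiableOn ℂ B (ball 0 1)) (ha : a ∈ ball 0 1) (hBa : B a = 0)
    (hunit : ∀ z ∈ ball 0 1, z ≠ a → IsUnit (B z)) (hderiv : IsUnit (deriv B a))
    (hinv : ∀ C > 1, ∀ᶠ z in toUnitSphere ℂ, ‖Ring.inverse (B z)‖ ≤ C) {z : ℂ}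
    (hz : z ∈ ball 0 1) : ‖Ring.inverse (blaschkeQuotient B a z)‖ ≤ 1 := by
  have ha1 : ‖a‖ < 1 := by simpa using ha
  have hH {z : ℂ} (hz : z ∈ ball 0 1) : IsUnit (blaschkeQuotient B a z) :=
    isUnit_blaschkeQuotient ha hBa hunit hderiv hz
  have hdiff : DifferentiableOn ℂ (fun z => Ring.inverse (blaschkeQuotient B a z)) (ball 0 1) :=
    fun z hz => (((differentiableOn_blaschkeQuotient hB ha).differentiableAt
      (isOpen_ball.mem_nhds hz)).inverse (hH hz)).differentiableWithinAt
  refine norm_le_of_eventually_toUnitSphere hdiff (fun C hC => ?_) hz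
  filter_upwards [hinv C hC, eventually_norm_mem_Ioo_toUnitSphere ha1] with z hC hz
  have hz1 : z ∈ ball 0 1 := by simpa using hz.2
  have hza : z ≠ a := fun h => hz.1.ne' (congrArg norm h)
  have hlt := norm_sub_lt_norm_one_sub_conj_mul ha1 hz.2
  refine le_of_mul_le_mul_left ?_ ((norm_nonneg _).trans_lt hlt)
  calc ‖1 - conj a * z‖ * ‖Ring.inverse (blaschkeQuotient B a z)‖
      = ‖z - a‖ * ‖Ring.inverse (B z)‖ := by
        rw [← norm_smul, ← norm_smul, sub_smul_inverse_eq (hunit z hz1 hza) (hH hz1)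
          (sub_smul_blaschkeQuotient hBa z)]
    _ ≤ ‖1 - conj a * z‖ * C := by gcongr

end NormedAlgebra

section Operator

variable {E : Type*} [NormedAddCommGroup E] [NormedSpace ℂ E]

theorem exists_isometry_sub_smul_eq [CompleteSpace E] [StrictConvexSpace ℝ E]
    {B : ℂ → E →L[ℂ] E} {a : ℂ} (hB : DifferentiableOn ℂ B (ball 0 1)) (ha : a ∈ ball 0 1)
    (hBa : B a = 0) (hunit : ∀ z ∈ ball 0 1, z ≠ a → IsUnit (B z)) (hderiv : IsUnit (deriv B a))
    (hle : ∀ z ∈ ball 0 1, ‖B z‖ ≤ 1)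
    (hinv : ∀ C > 1, ∀ᶠ z in toUnitSphere ℂ, ‖Ring.inverse (B z)‖ ≤ C) :
    (∀ v, ‖blaschkeQuotient B a a v‖ = ‖v‖) ∧
      ∀ z ∈ ball 0 1, (z - a) • blaschkeQuotient B a a = (1 - conj a * z) • B z := by
  have hiso : ∀ z ∈ ball 0 1, ∀ v, ‖blaschkeQuotient B a z v‖ = ‖v‖ := fun z hz =>
    norm_apply_eq_of_norm_le_one (isUnit_blaschkeQuotient ha hBa hunit hderiv hz)
      (norm_blaschkeQuotient_le hB ha hBa hle hz)
      (norm_inverse_blaschkeQuotient_le hB ha hBa hunit hderiv hinv hz)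
  refine ⟨hiso a ha, fun z hz => ?_⟩
  -- In a strictly convex space, a holomorphic function of constant norm is constant.
  have hconst : blaschkeQuotient B a z = blaschkeQuotient B a a := by
    ext v
    exact Complex.eqOn_of_isPreconnected_of_isMaxOn_norm (convex_ball 0 1).isPreconnected
      isOpen_ball ((differentiableOn_blaschkeQuotient hB ha).clm_apply (differentiableOn_const v))
      ha (fun y hy => ((hiso y hy v).trans (hiso a ha v).symm).le) hz
  rw [← hconst, sub_smul_blaschkeQuotient hBa]

end Operator

end BlaschkeQuotient

/-! ### Regular functions as operator-valued holomorphic functions -/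

section LeftComplexStructure

/-- `ℍ` as a complex vector space, `ℂ` acting by left multiplication. Right multiplications by
quaternions are then complex linear. -/
@[reducible] noncomputable def leftComplexNormedSpace : NormedSpace ℂ ℍ[ℝ] where
  smul z q := (z : ℍ[ℝ]) * q
  one_smul q := show ((1 : ℂ) : ℍ[ℝ]) * q = q by rw [coeComplex_one, one_mul]
  mul_smul z w q := show ((z * w : ℂ) : ℍ[ℝ]) * q = z * (w * q) by rw [coeComplex_mul, mul_assoc]
  smul_zero z := mul_zero (z : ℍ[ℝ])
  smul_add z := mul_add (z : ℍ[ℝ])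
  add_smul z w q := show ((z + w : ℂ) : ℍ[ℝ]) * q = z * q + w * q by rw [coeComplex_add, add_mul]
  zero_smul q := show ((0 : ℂ) : ℍ[ℝ]) * q = 0 by rw [coeComplex_zero, zero_mul]
  norm_smul_le z q := ((norm_mul (z : ℍ[ℝ]) q).trans (by rw [norm_coeComplex])).le

attribute [local instance] leftComplexNormedSpace

theorem complex_smul_eq_mul (z : ℂ) (q : ℍ[ℝ]) : z • q = z * q := rfl

theorem finiteDimensional_complex_quaternion : FiniteDimensional ℂ ℍ[ℝ] :=
  have : IsScalarTower ℝ ℂ ℍ[ℝ] := ⟨fun r z q => by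
    rw [complex_smul_eq_mul, complex_smul_eq_mul, ← smul_mul_assoc]
    congr 1
    ext <;> simp⟩
  Module.Finite.of_restrictScalars_finite ℝ ℂ ℍ[ℝ]

attribute [local instance] finiteDimensional_complex_quaternion

/-- Right multiplication by `c`, as a complex linear operator. -/
noncomputable def rightMul (c : ℍ[ℝ]) : ℍ[ℝ] →L[ℂ] ℍ[ℝ] :=
  LinearMap.mkContinuous
    { toFun := (· * c)
      map_add' := fun p q => add_mul p q c
      map_smul' := fun z q => mul_assoc (z : ℍ[ℝ]) q c }
    ‖c‖ fun v => ((norm_mul v c).trans (mul_comm _ _)).le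

@[simp]
theorem rightMul_apply (c v : ℍ[ℝ]) : rightMul c v = v * c := rfl

theorem norm_rightMul_le (c : ℍ[ℝ]) : ‖rightMul c‖ ≤ ‖c‖ :=
  LinearMap.mkContinuous_norm_le _ (norm_nonneg c) _

theorem rightMul_one : rightMul 1 = 1 := by
  ext1 v
  exact mul_one v

theorem rightMul_sub (b c : ℍ[ℝ]) : rightMul (b - c) = rightMul b - rightMul c := by
  ext1 v
  exact mul_sub v b c

theorem rightMul_injective : Function.Injective rightMul := fun b c h => by
  simpa using DFunLike.congr_fun h 1

theorem rightMul_mul (b c : ℍ[ℝ]) : rightMul (b * c) = rightMul c * rightMul b := by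
  ext1 v
  exact (mul_assoc v b c).symm

theorem ofReal_smul_rightMul (r : ℝ) (c : ℍ[ℝ]) : (r : ℂ) • rightMul c = rightMul (r * c) := by
  ext1 v
  simp only [smul_apply, rightMul_apply, complex_smul_eq_mul, coeComplex_coe]
  rw [← mul_assoc, ← mul_assoc, coe_commutes]

theorem isUnit_rightMul {c : ℍ[ℝ]} (hc : c ≠ 0) : IsUnit (rightMul c) :=
  isUnit_iff_exists.2 ⟨rightMul c⁻¹, by rw [← rightMul_mul, inv_mul_cancel₀ hc, rightMul_one],
    by rw [← rightMul_mul, mul_inv_cancel₀ hc, rightMul_one]⟩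

theorem inverse_rightMul {c : ℍ[ℝ]} (hc : c ≠ 0) :
    Ring.inverse (rightMul c) = rightMul c⁻¹ := by
  refine (isUnit_rightMul hc).mul_left_cancel ?_
  rw [Ring.mul_inverse_cancel _ (isUnit_rightMul hc), ← rightMul_mul, inv_mul_cancel₀ hc,
    rightMul_one]

theorem isClosed_range_rightMul : IsClosed (range rightMul) := by
  have hrange : range rightMul = ⋂ v : ℍ[ℝ], {L | L v = v * L 1} := by
    ext L
    refine ⟨?_, fun hL => ⟨L 1, ?_⟩⟩
    · rintro ⟨c, rfl⟩
      exact mem_iInter.2 fun v => by simp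
    · ext1 v
      exact (mem_iInter.1 hL v).symm
  rw [hrange]
  exact isClosed_iInter fun v => isClosed_eq (by fun_prop) (by fun_prop)

section PointwiseRightMul

/-- `T` acts on each vector as the right multiplication by some element of `P`. -/
def IsPointwiseRightMul (T : ℍ[ℝ] →L[ℂ] ℍ[ℝ]) (P : Set ℍ[ℝ]) : Prop :=
  ∀ v, ∃ p ∈ P, T v = v * p

namespace IsPointwiseRightMul

variable {T : ℍ[ℝ] →L[ℂ] ℍ[ℝ]} {P : Set ℍ[ℝ]} (hT : IsPointwiseRightMul T P)

include hT

theorem isUnit (h0 : 0 ∉ P) : IsUnit T :=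
  isUnit_of_forall_apply_eq_zero fun v hv => by
    obtain ⟨p, hp, hpv⟩ := hT v
    exact (mul_eq_zero.1 (hpv.symm.trans hv)).resolve_right (ne_of_mem_of_not_mem hp h0)

theorem norm_inverse_le {ε : ℝ} (hε : 0 < ε) (hP : ∀ p ∈ P, ε ≤ ‖p‖) :
    ‖Ring.inverse T‖ ≤ ε⁻¹ := by
  have hunit : IsUnit T := hT.isUnit fun h => (norm_pos_iff.1 (hε.trans_le (hP 0 h))) rfl
  rw [← one_mul (Ring.inverse T)]
  refine opNorm_mul_inverse_le hunit (inv_nonneg.2 hε.le) fun v => ?_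
  obtain ⟨p, hp, hpv⟩ := hT v
  rw [hpv, one_apply_eq_self, inv_mul_eq_div, le_div_iff₀ hε, norm_mul]
  gcongr
  exact hP p hp

end IsPointwiseRightMul

end PointwiseRightMul

/-- `f` is represented on the unit ball by the power series `∑ qⁿ c n`. -/
def HasRegularExpansion (f : ℍ[ℝ] → ℍ[ℝ]) (c : ℕ → ℍ[ℝ]) : Prop :=
  ∀ q ∈ ball (0 : ℍ[ℝ]) 1, HasSum (fun n => q ^ n * c n) (f q)

/-- The operators `v ↦ ∑ zⁿ v c n`. When `v` conjugates `q` to the complex number `z`, the value at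
`v` is `v * f q`, where `f` is the sum of the power series with coefficients `c`. -/
noncomputable def sliceOp (c : ℕ → ℍ[ℝ]) (z : ℂ) : ℍ[ℝ] →L[ℂ] ℍ[ℝ] :=
  ∑' n, z ^ n • rightMul (c n)

theorem norm_eq_of_isConj {K : Type*} [NormedDivisionRing K] {p q : K} (h : IsConj p q) :
    ‖p‖ = ‖q‖ := by
  obtain ⟨v, hv⟩ := h
  have hnorm := congrArg norm hv.eq
  rw [norm_mul, norm_mul, mul_comm] at hnorm
  exact mul_right_cancel₀ (norm_ne_zero_iff.2 v.ne_zero) hnorm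

theorem norm_eq_of_isConj_coeComplex {z : ℂ} {q : ℍ[ℝ]} (h : IsConj (z : ℍ[ℝ]) q) : ‖q‖ = ‖z‖ := by
  rw [← norm_eq_of_isConj h, norm_coeComplex]

theorem coeComplex_eq_coe_of_isConj {z : ℂ} {a : ℝ} (h : IsConj (z : ℍ[ℝ]) a) : z = a := by
  obtain ⟨v, hv⟩ := h
  rw [SemiconjBy, coe_commutes] at hv
  have hza := mul_left_cancel₀ v.ne_zero hv
  exact Complex.ext (by simpa using congrArg QuaternionAlgebra.re hza)
    (by simpa using congrArg QuaternionAlgebra.imI hza)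

theorem exists_isConj_semiconjBy {K : Type*} [DivisionRing K] (p v : K) :
    ∃ q, IsConj p q ∧ SemiconjBy v q p := by
  obtain rfl | hv := eq_or_ne v 0
  · exact ⟨p, IsConj.refl p, SemiconjBy.zero_left p p⟩
  · have hconj : SemiconjBy v (v⁻¹ * p * v) p := by
      rw [SemiconjBy, mul_assoc, mul_inv_cancel_left₀ hv]
    exact ⟨_, IsConj.symm ⟨Units.mk0 v hv, hconj⟩, hconj⟩

theorem exists_semiconjBy_coeComplex (q : ℍ[ℝ]) :
    ∃ (z : ℂ) (v : ℍ[ℝ]), v ≠ 0 ∧ SemiconjBy v q z := by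
  -- Since `q.im * q.im = j * j`, the sum `q.im + j` intertwines `q.im` and `j`.
  set j : ℍ[ℝ] := ((‖q.im‖ * Complex.I : ℂ) : ℍ[ℝ]) with hj
  have hz (r s : ℝ) : ((r + s * (‖q.im‖ * Complex.I) : ℂ) : ℍ[ℝ]) = r + s * j := by
    rw [coeComplex_add, coeComplex_mul, coeComplex_coe, coeComplex_coe]
  by_cases hv : q.im + j = 0
  · refine ⟨q.re + (-1 : ℝ) * (‖q.im‖ * Complex.I), 1, one_ne_zero, ?_⟩
    rw [hz]
    nth_rw 1 [← re_add_im q, eq_neg_of_add_eq_zero_left hv]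
    simp
  · refine ⟨q.re + (1 : ℝ) * (‖q.im‖ * Complex.I), q.im + j, hv, ?_⟩
    rw [hz]
    have hsq : q.im * q.im = j * j := by
      rw [← sq, ← sq, sq_eq_neg_normSq.2 (re_im q), sq_eq_neg_normSq.2 (by simp [hj]),
        normSq_eq_norm_mul_self, normSq_eq_norm_mul_self, hj, norm_coeComplex]
      simp
    have hsemi : SemiconjBy (q.im + j) q.im j := by
      rw [SemiconjBy, add_mul, mul_add, hsq, add_comm]
    have hsemi := SemiconjBy.add_right (coe_commutes q.re (q.im + j)).symm hsemi
    simpa only [re_add_im, coe_one, one_mul] using hsemi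

section PowerSeries

variable {f : ℍ[ℝ] → ℍ[ℝ]} {c : ℕ → ℍ[ℝ]} (hf : HasRegularExpansion f c)

namespace HasRegularExpansion

include hf

theorem summable_pow_mul_norm {r : ℝ} (hr0 : 0 ≤ r) (hr1 : r < 1) :
    Summable fun n => r ^ n * ‖c n‖ := by
  obtain ⟨s, hrs, hs1⟩ := exists_between hr1
  have hs0 : 0 < s := hr0.trans_lt hrs
  have hs : (s : ℍ[ℝ]) ∈ ball 0 1 := by simpa [abs_of_pos hs0] using hs1
  obtain ⟨M, hM⟩ := (hf s hs).summable.tendsto_atTop_zero.norm.bddAbove_range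
  have hM : ∀ n, s ^ n * ‖c n‖ ≤ M := fun n => by simpa [abs_of_pos hs0] using hM ⟨n, rfl⟩
  refine Summable.of_nonneg_of_le (fun n => by positivity) (fun n => ?_)
    ((summable_geometric_of_lt_one (by positivity) ((div_lt_one hs0).2 hrs)).mul_right M)
  calc r ^ n * ‖c n‖ = (r / s) ^ n * (s ^ n * ‖c n‖) := by
        rw [← mul_assoc, ← mul_pow, div_mul_cancel₀ r hs0.ne']
    _ ≤ (r / s) ^ n * M := by gcongr; exact hM n

theorem continuousOn : ContinuousOn f (ball 0 1) := by
  intro p hp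
  obtain ⟨r, hpr, hr1⟩ := exists_between (mem_ball_zero_iff.1 hp)
  have hsum := hf.summable_pow_mul_norm ((norm_nonneg p).trans hpr.le) hr1
  have hcont : ContinuousOn (fun q => ∑' n, q ^ n * c n) (ball 0 r) :=
    continuousOn_tsum (fun n => by fun_prop) hsum fun n q hq => by
      rw [norm_mul, norm_pow]
      gcongr
      exact (mem_ball_zero_iff.1 hq).le
  have hcont : ContinuousOn f (ball 0 r) :=
    hcont.congr fun q hq => (hf q (ball_subset_ball hr1.le hq)).tsum_eq.symm
  exact (hcont.continuousAt (isOpen_ball.mem_nhds (mem_ball_zero_iff.2 hpr))).continuousWithinAt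

theorem sub_const (w : ℍ[ℝ]) :
    HasRegularExpansion (fun q => f q - w) (fun n => c n - if n = 0 then w else 0) := by
  intro q hq
  have hw : HasSum (fun n => q ^ n * if n = 0 then w else 0) w := by
    convert hasSum_ite_eq 0 w using 2 with n
    split_ifs with hn
    · rw [hn, pow_zero, one_mul]
    · exact mul_zero _
  simp only [mul_sub]
  exact (hf q hq).sub hw

theorem differentiableOn_sliceOp : DifferentiableOn ℂ (sliceOp c) (ball 0 1) := by
  intro z hz
  obtain ⟨r, hzr, hr1⟩ := exists_between (mem_ball_zero_iff.1 hz)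
  have hsum := hf.summable_pow_mul_norm ((norm_nonneg z).trans hzr.le) hr1
  have hdiff : DifferentiableOn ℂ (sliceOp c) (ball 0 r) :=
    Complex.differentiableOn_tsum_of_summable_norm hsum (fun n => by fun_prop) isOpen_ball
      fun n w hw => by
        rw [norm_smul, norm_pow]
        have hr0 : 0 ≤ r := (norm_nonneg z).trans hzr.le
        gcongr
        exacts [(mem_ball_zero_iff.1 hw).le, norm_rightMul_le _]
  exact (hdiff.differentiableAt
    (isOpen_ball.mem_nhds (mem_ball_zero_iff.2 hzr))).differentiableWithinAt

theorem hasSum_sliceOp {z : ℂ} (hz : z ∈ ball 0 1) :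
    HasSum (fun n => z ^ n • rightMul (c n)) (sliceOp c z) := by
  refine (Summable.of_norm_bounded (hf.summable_pow_mul_norm (norm_nonneg z)
    (mem_ball_zero_iff.1 hz)) fun n => ?_).hasSum
  rw [norm_smul, norm_pow]
  gcongr
  exact norm_rightMul_le _

theorem sliceOp_apply {z : ℂ} (hz : z ∈ ball 0 1) {q v : ℍ[ℝ]} (hq : q ∈ ball 0 1)
    (hv : SemiconjBy v q z) : sliceOp c z v = v * f q := by
  have hterm (n : ℕ) : (z ^ n • rightMul (c n)) v = v * (q ^ n * c n) :=
    calc ((z ^ n : ℂ) : ℍ[ℝ]) * (v * c n) = z ^ n * v * c n := by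
          rw [mul_assoc, coeComplex_pow]
      _ = v * (q ^ n * c n) := by rw [← (hv.pow_right n).eq, mul_assoc]
  have hsum : HasSum (fun n => (z ^ n • rightMul (c n)) v) (sliceOp c z v) :=
    hasSum_clm_apply (hf.hasSum_sliceOp hz) v
  simp only [hterm] at hsum
  exact hsum.unique ((hf q hq).mul_left v)

theorem sliceOp_ofReal {x : ℝ} (hx : |x| < 1) : sliceOp c x = rightMul (f x) := by
  ext1 v
  refine hf.sliceOp_apply (by simpa using hx) (by simpa using hx) ?_
  rw [SemiconjBy, coeComplex_coe, coe_commutes]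

theorem isPointwiseRightMul_sliceOp {z : ℂ} (hz : z ∈ ball 0 1) :
    IsPointwiseRightMul (sliceOp c z) (f '' {q | IsConj (z : ℍ[ℝ]) q}) := fun v =>
  let ⟨q, hzq, hv⟩ := exists_isConj_semiconjBy (z : ℍ[ℝ]) v
  ⟨f q, mem_image_of_mem f hzq,
    hf.sliceOp_apply hz (by simpa [norm_eq_of_isConj_coeComplex hzq] using hz) hv⟩

theorem le_norm_of_forall_mem_sphere_le_norm {r ε : ℝ} (hr : r < 1) (hε : 0 < ε)
    (h0 : ∀ q ∈ closedBall 0 r, f q ≠ 0) (hsphere : ∀ q ∈ sphere 0 r, ε ≤ ‖f q‖) {q : ℍ[ℝ]}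
    (hq : q ∈ ball 0 r) : ε ≤ ‖f q‖ := by
  have hball : closedBall (0 : ℂ) r ⊆ ball 0 1 := closedBall_subset_ball hr
  obtain ⟨z, v, hv, hvq⟩ := exists_semiconjBy_coeComplex q
  have hzq : ‖z‖ = ‖q‖ :=
    (norm_eq_of_isConj_coeComplex (IsConj.symm ⟨Units.mk0 v hv, hvq⟩)).symm
  have hz : z ∈ ball 0 r := by simpa [hzq] using hq
  have hunit {y : ℂ} (hy : y ∈ closedBall 0 r) : IsUnit (sliceOp c y) :=
    (hf.isPointwiseRightMul_sliceOp (hball hy)).isUnit <| by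
      rintro ⟨p, hp, hp0⟩
      exact h0 p (by simpa [norm_eq_of_isConj_coeComplex hp] using hy) hp0
  have hdiff : DifferentiableOn ℂ (fun y => Ring.inverse (sliceOp c y)) (closedBall 0 r) :=
    fun y hy => ((hf.differentiableOn_sliceOp.differentiableAt
      (isOpen_ball.mem_nhds (hball hy))).inverse (hunit hy)).differentiableWithinAt
  have hinv : ‖Ring.inverse (sliceOp c z)‖ ≤ ε⁻¹ := by
    refine Complex.norm_le_of_forall_mem_frontier_norm_le isBounded_ball
      (hdiff.diffContOnCl_ball subset_rfl) (fun y hy => ?_) (subset_closure hz)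
    have hy : y ∈ sphere 0 r := frontier_ball_subset_sphere hy
    refine (hf.isPointwiseRightMul_sliceOp (hball (sphere_subset_closedBall hy))).norm_inverse_le
      hε ?_
    rintro _ ⟨p, hp, rfl⟩
    exact hsphere p (by simpa [norm_eq_of_isConj_coeComplex hp] using hy)
  have hz := ball_subset_closedBall hz
  have hle := (Ring.inverse (sliceOp c z)).le_of_opNorm_le hinv (sliceOp c z v)
  rw [inverse_apply_apply (hunit hz), hf.sliceOp_apply (hball hz) (ball_subset_ball hr.le hq) hvq,
    norm_mul, inv_mul_eq_div, le_div_iff₀ hε] at hle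
  exact le_of_mul_le_mul_left hle (norm_pos_iff.2 hv)

/-- By injectivity `f - f q` has no zero in a ball of radius less than `‖q‖`, so that the minimum
principle keeps `f q` away from `f p`. -/
theorem disjoint_nhds_map_toUnitSphere (hinj : InjOn f (ball 0 1)) {p : ℍ[ℝ]}
    (hp : p ∈ ball 0 1) : Disjoint (𝓝 (f p)) (map f (toUnitSphere ℍ[ℝ])) := by
  obtain ⟨r, hpr, hr1⟩ := exists_between (mem_ball_zero_iff.1 hp)
  have hsphere : sphere (0 : ℍ[ℝ]) r ⊆ ball 0 1 :=
    sphere_subset_closedBall.trans (closedBall_subset_ball hr1)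
  have hfp : f p ∉ f '' sphere 0 r := by
    rintro ⟨q, hq, hqp⟩
    rw [hinj (hsphere hq) hp hqp] at hq
    exact hpr.ne (mem_sphere_zero_iff_norm.1 hq)
  have hclosed : IsClosed (f '' sphere 0 r) :=
    ((isCompact_sphere 0 r).image_of_continuousOn (hf.continuousOn.mono hsphere)).isClosed
  obtain ⟨ε, hε, hdisj⟩ := Metric.mem_nhds_iff.1 (hclosed.isOpen_compl.mem_nhds hfp)
  refine disjoint_of_disjoint_of_mem disjoint_compl_right (ball_mem_nhds (f p) (half_pos hε))
    (mem_map.2 ?_)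
  filter_upwards [eventually_norm_mem_Ioo_toUnitSphere hr1] with q ⟨hrq, hq1⟩ hqp
  have hq : q ∈ ball 0 1 := mem_ball_zero_iff.2 hq1
  have hmin := (hf.sub_const (f q)).le_norm_of_forall_mem_sphere_le_norm hr1 (half_pos hε)
    (fun y hy hyq => ?_) (fun y hy => ?_) (mem_ball_zero_iff.2 hpr)
  · rw [mem_ball_iff_norm, norm_sub_rev] at hqp
    exact hqp.not_ge hmin
  · rw [hinj (closedBall_subset_ball hr1 hy) hq (sub_eq_zero.1 hyq)] at hy
    exact hrq.not_ge (mem_closedBall_zero_iff.1 hy)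
  · have hyp : ε ≤ dist (f y) (f p) := not_lt.1 fun h => hdisj h (mem_image_of_mem f hy)
    rw [← dist_eq_norm]
    linarith [dist_triangle (f y) (f q) (f p), mem_ball.1 hqp]

theorem tendsto_toUnitSphere (hbij : BijOn f (ball 0 1) (ball 0 1)) :
    Tendsto f (toUnitSphere ℍ[ℝ]) (toUnitSphere ℍ[ℝ]) := by
  refine tendsto_comap_iff.2 ((nhdsLT_basis (1 : ℝ)).tendsto_right_iff.2 fun ρ hρ => ?_)
  have hdisj : Disjoint (𝓝ˢ (closedBall 0 ρ)) (map f (toUnitSphere ℍ[ℝ])) :=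
    (isCompact_closedBall 0 ρ).disjoint_nhdsSet_left.2 fun w hw => by
      obtain ⟨p, hp, rfl⟩ := hbij.surjOn (closedBall_subset_ball hρ hw)
      exact hf.disjoint_nhds_map_toUnitSphere hbij.injOn hp
  obtain ⟨U, hU, V, hV, hUV⟩ := Filter.disjoint_iff.1 hdisj
  filter_upwards [hV, eventually_norm_mem_Ioo_toUnitSphere zero_lt_one] with q hqV hq
  refine ⟨not_le.1 fun hqρ => ?_, mem_ball_zero_iff.1 (hbij.mapsTo (mem_ball_zero_iff.2 hq.2))⟩
  exact disjoint_left.1 hUV (subset_of_mem_nhdsSet hU (mem_closedBall_zero_iff.2 hqρ)) hqV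

theorem exists_deriv_sliceOp_ne_zero (hinj : InjOn f (ball 0 1)) :
    ∃ a : ℝ, |a| < 1 ∧ deriv (sliceOp c) a ≠ 0 := by
  let r : ℝ := 1 / 2
  have hr : |r| < 1 := by norm_num [r]
  have hne : sliceOp c (0 : ℝ) ≠ sliceOp c r := by
    rw [hf.sliceOp_ofReal (by simp), hf.sliceOp_ofReal hr]
    refine fun h => ?_
    have h := coe_injective (hinj (by simp) (by simpa using hr) (rightMul_injective h))
    norm_num [r] at h
  have hball : segment ℝ ((0 : ℝ) : ℂ) r ⊆ ball 0 1 :=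
    (convex_ball 0 1).segment_subset (by simp) (by simpa using hr)
  obtain ⟨t, ht, hderiv⟩ := exists_deriv_ne_zero_of_ne (fun t ht =>
    hf.differentiableOn_sliceOp.differentiableAt (isOpen_ball.mem_nhds (hball ht))) hne
  obtain ⟨a, -, rfl⟩ := (image_segment ℝ Complex.ofRealCLM.toLinearMap.toAffineMap 0 r).ge ht
  exact ⟨a, by simpa using hball ht, hderiv⟩

end HasRegularExpansion

end PowerSeries

/-! ### The operator Schwarz-Pick transform -/

section SchwarzPick

/-- The operator version of the transformation `p ↦ (1 - p * star w)⁻¹ * (p - w)`. -/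
noncomputable def schwarzPick (w : ℍ[ℝ]) (T : ℍ[ℝ] →L[ℂ] ℍ[ℝ]) : ℍ[ℝ] →L[ℂ] ℍ[ℝ] :=
  (T - rightMul w) * Ring.inverse (1 - rightMul (star w) * T)

variable {T : ℍ[ℝ] →L[ℂ] ℍ[ℝ]} {P : Set ℍ[ℝ]} {p v w : ℍ[ℝ]} {C : ℝ}

theorem sub_rightMul_apply (h : T v = v * p) : (T - rightMul w) v = v * (p - w) := by
  rw [sub_apply, rightMul_apply, h, mul_sub]

theorem one_sub_rightMul_star_mul_apply (h : T v = v * p) :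
    (1 - rightMul (star w) * T) v = v * (1 - p * star w) := by
  rw [sub_apply, one_apply_eq_self, mul_apply_eq_comp, h, rightMul_apply, mul_sub, mul_one,
    mul_assoc]

section Pointwise

variable (hT : IsPointwiseRightMul T P) (hP : P ⊆ ball 0 1) (hw : ‖w‖ < 1)

include hT

theorem IsPointwiseRightMul.sub_rightMul (w : ℍ[ℝ]) :
    IsPointwiseRightMul (T - rightMul w) ((· - w) '' P) := fun v =>
  let ⟨p, hp, hv⟩ := hT v
  ⟨p - w, mem_image_of_mem _ hp, sub_rightMul_apply hv⟩

theorem IsPointwiseRightMul.one_sub_rightMul_star_mul (w : ℍ[ℝ]) :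
    IsPointwiseRightMul (1 - rightMul (star w) * T) ((1 - · * star w) '' P) := fun v =>
  let ⟨p, hp, hv⟩ := hT v
  ⟨1 - p * star w, mem_image_of_mem _ hp, one_sub_rightMul_star_mul_apply hv⟩

theorem isUnit_sub_rightMul (hwP : w ∉ P) : IsUnit (T - rightMul w) := by
  refine (hT.sub_rightMul w).isUnit ?_
  rintro ⟨p, hp, hpw⟩
  exact hwP (sub_eq_zero.1 hpw ▸ hp)

include hP hw

theorem isUnit_one_sub_rightMul_star_mul : IsUnit (1 - rightMul (star w) * T) := by
  refine (hT.one_sub_rightMul_star_mul w).isUnit ?_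
  rintro ⟨p, hp, hzero⟩
  exact one_sub_mul_star_ne_zero (mem_ball_zero_iff.1 (hP hp)) hw hzero

theorem schwarzPick_apply (h : T v = v * p) :
    schwarzPick w T (v * (1 - p * star w)) = v * (p - w) := by
  rw [← one_sub_rightMul_star_mul_apply h, schwarzPick, mul_apply_eq_comp,
    inverse_apply_apply (isUnit_one_sub_rightMul_star_mul hT hP hw), sub_rightMul_apply h]

theorem norm_schwarzPick_le : ‖schwarzPick w T‖ ≤ 1 := by
  refine opNorm_mul_inverse_le (isUnit_one_sub_rightMul_star_mul hT hP hw) zero_le_one fun v => ?_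
  obtain ⟨p, hp, hv⟩ := hT v
  rw [sub_rightMul_apply hv, one_sub_rightMul_star_mul_apply hv, one_mul, norm_mul, norm_mul]
  gcongr
  exact (norm_sub_lt_norm_one_sub_mul_star (mem_ball_zero_iff.1 (hP hp)) hw).le

theorem isUnit_schwarzPick (hwP : w ∉ P) : IsUnit (schwarzPick w T) :=
  (isUnit_sub_rightMul hT hwP).mul (isUnit_one_sub_rightMul_star_mul hT hP hw).ringInverse

theorem norm_inverse_schwarzPick_le (hwP : w ∉ P) (hC : 0 ≤ C)
    (h : ∀ p ∈ P, ‖1 - p * star w‖ ≤ C * ‖p - w‖) : ‖Ring.inverse (schwarzPick w T)‖ ≤ C := by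
  have hunit := isUnit_sub_rightMul hT hwP
  rw [schwarzPick, inverse_mul_inverse hunit (isUnit_one_sub_rightMul_star_mul hT hP hw)]
  refine opNorm_mul_inverse_le hunit hC fun v => ?_
  obtain ⟨p, hp, hv⟩ := hT v
  rw [sub_rightMul_apply hv, one_sub_rightMul_star_mul_apply hv, norm_mul, norm_mul, mul_left_comm]
  gcongr
  exact h p hp

end Pointwise

theorem schwarzPick_rightMul (hp : ‖p‖ < 1) (hw : ‖w‖ < 1) :
    schwarzPick w (rightMul p) = rightMul ((1 - p * star w)⁻¹ * (p - w)) := by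
  rw [schwarzPick, rightMul_mul, ← inverse_rightMul (one_sub_mul_star_ne_zero hp hw), rightMul_sub,
    rightMul_sub, rightMul_one, rightMul_mul]

section Derivative

variable {A : ℂ → ℍ[ℝ] →L[ℂ] ℍ[ℝ]} {z : ℂ}

theorem differentiableAt_schwarzPick (hA : DifferentiableAt ℂ A z)
    (hunit : IsUnit (1 - rightMul (star w) * A z)) :
    DifferentiableAt ℂ (fun z => schwarzPick w (A z)) z :=
  (hA.sub_const _).mul ((DifferentiableAt.const_sub (hA.const_mul _) _).inverse hunit)

theorem deriv_schwarzPick (hA : DifferentiableAt ℂ A z)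
    (hunit : IsUnit (1 - rightMul (star w) * A z)) (hz : A z = rightMul w) :
    deriv (fun z => schwarzPick w (A z)) z =
      deriv A z * Ring.inverse (1 - rightMul (star w) * A z) := by
  have hinv := (DifferentiableAt.const_sub (hA.const_mul (rightMul (star w))) 1).inverse hunit
  refine ((hA.hasDerivAt.sub_const (rightMul w)).mul hinv.hasDerivAt).deriv.trans ?_
  rw [hz, sub_self, zero_mul, add_zero]

end Derivative

end SchwarzPick

section Normalization

variable {f : ℍ[ℝ] → ℍ[ℝ]} {c : ℕ → ℍ[ℝ]} {a : ℝ} {w : ℍ[ℝ]} {z : ℂ}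

theorem image_isConj_subset_ball (hmaps : MapsTo f (ball 0 1) (ball 0 1)) (hz : z ∈ ball 0 1) :
    f '' {q | IsConj (z : ℍ[ℝ]) q} ⊆ ball 0 1 :=
  image_subset_iff.2 fun q hq =>
    hmaps (by simpa [norm_eq_of_isConj_coeComplex hq] using hz)

theorem notMem_image_isConj (hinj : InjOn f (ball 0 1)) (ha : |a| < 1) (hz : z ∈ ball 0 1)
    (hza : z ≠ a) : f a ∉ f '' {q | IsConj (z : ℍ[ℝ]) q} := by
  rintro ⟨q, hq, hqa⟩
  have hq1 : q ∈ ball 0 1 := by simpa [norm_eq_of_isConj_coeComplex hq] using hz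
  rw [mem_ofPred_eq, hinj hq1 (by simpa using ha) hqa] at hq
  exact hza (coeComplex_eq_coe_of_isConj hq)

namespace HasRegularExpansion

variable (hf : HasRegularExpansion f c)

include hf

theorem isUnit_one_sub_sliceOp (hmaps : MapsTo f (ball 0 1) (ball 0 1)) (hw : ‖w‖ < 1)
    (hz : z ∈ ball 0 1) : IsUnit (1 - rightMul (star w) * sliceOp c z) :=
  isUnit_one_sub_rightMul_star_mul (hf.isPointwiseRightMul_sliceOp hz)
    (image_isConj_subset_ball hmaps hz) hw

theorem differentiableOn_schwarzPick_sliceOp (hmaps : MapsTo f (ball 0 1) (ball 0 1))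
    (hw : ‖w‖ < 1) : DifferentiableOn ℂ (fun z => schwarzPick w (sliceOp c z)) (ball 0 1) :=
  fun _ hz => (differentiableAt_schwarzPick
    (hf.differentiableOn_sliceOp.differentiableAt (isOpen_ball.mem_nhds hz))
    (hf.isUnit_one_sub_sliceOp hmaps hw hz)).differentiableWithinAt

theorem eventually_norm_inverse_schwarzPick_sliceOp_le (hbij : BijOn f (ball 0 1) (ball 0 1))
    (ha : |a| < 1) {C : ℝ} (hC : 1 < C) :
    ∀ᶠ z in toUnitSphere ℂ, ‖Ring.inverse (schwarzPick (f a) (sliceOp c z))‖ ≤ C := by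
  have ha1 : (a : ℍ[ℝ]) ∈ ball 0 1 := by simpa using ha
  have hw : ‖f a‖ < 1 := mem_ball_zero_iff.1 (hbij.mapsTo ha1)
  have hbound := eventually_toUnitSphere.1 <|
    (hf.tendsto_toUnitSphere hbij).eventually (eventually_norm_one_sub_mul_star_le hw hC)
  filter_upwards [preimage_mem_comap hbound, eventually_norm_mem_Ioo_toUnitSphere ha]
    with z hzC hz
  have hz1 : z ∈ ball 0 1 := mem_ball_zero_iff.2 hz.2
  have hza : z ≠ a := fun h => hz.1.ne' (by rw [h, Complex.norm_real, Real.norm_eq_abs])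
  refine norm_inverse_schwarzPick_le (hf.isPointwiseRightMul_sliceOp hz1)
    (image_isConj_subset_ball hbij.mapsTo hz1) hw (notMem_image_isConj hbij.injOn ha hz1 hza)
    (zero_le_one.trans hC.le) ?_
  rintro _ ⟨q, hq, rfl⟩
  exact hzC q (norm_eq_of_isConj_coeComplex hq)

theorem deriv_schwarzPick_sliceOp_ne_zero (hmaps : MapsTo f (ball 0 1) (ball 0 1)) (ha : |a| < 1)
    (hderiv : deriv (sliceOp c) a ≠ 0) :
    deriv (fun z => schwarzPick (f a) (sliceOp c z)) a ≠ 0 := by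
  have ha1 : (a : ℂ) ∈ ball 0 1 := by simpa using ha
  have hw : ‖f a‖ < 1 := mem_ball_zero_iff.1 (hmaps (by simpa using ha))
  have hunit := hf.isUnit_one_sub_sliceOp hmaps hw ha1
  rw [deriv_schwarzPick (hf.differentiableOn_sliceOp.differentiableAt (isOpen_ball.mem_nhds ha1))
    hunit (hf.sliceOp_ofReal ha)]
  exact fun h => hderiv (hunit.ringInverse.mul_left_eq_zero.1 h)

theorem deriv_schwarzPick_sliceOp_mem_range (hmaps : MapsTo f (ball 0 1) (ball 0 1))
    (ha : |a| < 1) :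
    deriv (fun z => schwarzPick (f a) (sliceOp c z)) a ∈ range rightMul := by
  have ha1 : (a : ℂ) ∈ ball 0 1 := by simpa using ha
  have hnorm {x : ℝ} (hx : |x| < 1) : ‖f x‖ < 1 :=
    mem_ball_zero_iff.1 (hmaps (by simpa using hx))
  have hvalue {x : ℝ} (hx : |x| < 1) :
      schwarzPick (f a) (sliceOp c x) = rightMul ((1 - f x * star (f a))⁻¹ * (f x - f a)) := by
    rw [hf.sliceOp_ofReal hx, schwarzPick_rightMul (hnorm hx) (hnorm ha)]
  refine deriv_mem_of_eventually_slope_ofReal_mem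
    ((hf.differentiableOn_schwarzPick_sliceOp hmaps (hnorm ha)).differentiableAt
      (isOpen_ball.mem_nhds ha1)) isClosed_range_rightMul ?_
  filter_upwards [nhdsWithin_le_nhds (continuous_abs.continuousAt.eventually_lt_const ha)]
    with x hx
  rw [slope, hvalue hx, hvalue ha, vsub_eq_sub, ← rightMul_sub, ← Complex.ofReal_sub,
    ← Complex.ofReal_inv, ofReal_smul_rightMul]
  exact mem_range_self _

theorem exists_schwarzPick_sliceOp_eq (hbij : BijOn f (ball 0 1) (ball 0 1)) (ha : |a| < 1)
    (hderiv : deriv (sliceOp c) a ≠ 0) :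
    ∃ u, ‖u‖ = 1 ∧ ∀ z ∈ ball (0 : ℂ) 1,
      (z - a) • rightMul u = (1 - a * z) • schwarzPick (f a) (sliceOp c z) := by
  have hmaps := hbij.mapsTo
  have ha1 : (a : ℂ) ∈ ball 0 1 := by simpa using ha
  have hw : ‖f a‖ < 1 := mem_ball_zero_iff.1 (hmaps (by simpa using ha))
  obtain ⟨d, hd⟩ := hf.deriv_schwarzPick_sliceOp_mem_range hmaps ha
  have hd0 : d ≠ 0 := by
    rintro rfl
    refine hf.deriv_schwarzPick_sliceOp_ne_zero hmaps ha hderiv (hd.symm.trans ?_)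
    rw [← sub_self (1 : ℍ[ℝ]), rightMul_sub, sub_self]
  obtain ⟨hiso, heq⟩ := exists_isometry_sub_smul_eq
    (hf.differentiableOn_schwarzPick_sliceOp hmaps hw) ha1
    (by rw [schwarzPick, hf.sliceOp_ofReal ha, sub_self, zero_mul])
    (fun z hz hza => isUnit_schwarzPick (hf.isPointwiseRightMul_sliceOp hz)
      (image_isConj_subset_ball hmaps hz) hw (notMem_image_isConj hbij.injOn ha hz hza))
    (hd ▸ isUnit_rightMul hd0)
    (fun _ hz => norm_schwarzPick_le (hf.isPointwiseRightMul_sliceOp hz)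
      (image_isConj_subset_ball hmaps hz) hw)
    (fun _ hC => hf.eventually_norm_inverse_schwarzPick_sliceOp_le hbij ha hC)
  have hu : blaschkeQuotient (fun z => schwarzPick (f a) (sliceOp c z)) a a =
      rightMul ((1 - a * a : ℝ) * d) := by
    rw [blaschkeQuotient_self, ← hd, ← ofReal_smul_rightMul]
    simp
  rw [hu] at hiso heq
  refine ⟨_, by simpa only [rightMul_apply, one_mul, norm_one] using hiso 1, fun z hz => ?_⟩
  simpa only [Complex.conj_ofReal] using heq z hz

theorem exists_functional_equation (hbij : BijOn f (ball 0 1) (ball 0 1)) :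
    ∃ (a : ℝ) (w u : ℍ[ℝ]), |a| < 1 ∧ ‖w‖ < 1 ∧ ‖u‖ = 1 ∧ ∀ q ∈ ball 0 1,
      (q - a) * (1 - f q * star w) * u = (1 - a * q) * (f q - w) := by
  obtain ⟨a, ha, hderiv⟩ := hf.exists_deriv_sliceOp_ne_zero hbij.injOn
  obtain ⟨u, hu, heq⟩ := hf.exists_schwarzPick_sliceOp_eq hbij ha hderiv
  have hw : ‖f a‖ < 1 := mem_ball_zero_iff.1 (hbij.mapsTo (by simpa using ha))
  refine ⟨a, f a, u, ha, hw, hu, fun q hq => ?_⟩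
  obtain ⟨z, v, hv, hvq⟩ := exists_semiconjBy_coeComplex q
  have hz : z ∈ ball 0 1 := by
    have hzq := norm_eq_of_isConj_coeComplex (IsConj.symm ⟨Units.mk0 v hv, hvq⟩)
    simpa [hzq] using hq
  have ha : SemiconjBy v a ((a : ℂ) : ℍ[ℝ]) := by rw [SemiconjBy, coeComplex_coe, coe_commutes]
  have hsub : v * (q - a) = ((z - a : ℂ) : ℍ[ℝ]) * v := by
    rw [coeComplex_sub, (hvq.sub_right ha).eq]
  have hone_sub : v * (1 - a * q) = ((1 - a * z : ℂ) : ℍ[ℝ]) * v := by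
    rw [coeComplex_sub, coeComplex_one, coeComplex_mul,
      ((SemiconjBy.one_right v).sub_right (ha.mul_right hvq)).eq]
  have happly := DFunLike.congr_fun (heq z hz) (v * (1 - f q * star (f a)))
  simp only [smul_apply, complex_smul_eq_mul, rightMul_apply] at happly
  rw [schwarzPick_apply (hf.isPointwiseRightMul_sliceOp hz)
    (image_isConj_subset_ball hbij.mapsTo hz) hw (hf.sliceOp_apply hz hq hvq)] at happly
  refine mul_left_cancel₀ hv ?_
  calc v * ((q - a) * (1 - f q * star (f a)) * u)
      = v * (q - a) * (1 - f q * star (f a)) * u := by simp only [mul_assoc]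
    _ = ((z - a : ℂ) : ℍ[ℝ]) * (v * (1 - f q * star (f a)) * u) := by
        rw [hsub]; simp only [mul_assoc]
    _ = v * (1 - a * q) * (f q - f a) := by rw [happly, hone_sub, mul_assoc]
    _ = v * ((1 - a * q) * (f q - f a)) := mul_assoc _ _ _

end HasRegularExpansion

end Normalization

end LeftComplexStructure

/-! ### Solving the functional equation -/

section RegularMoebius

/-- The symmetrization of the regular polynomial `1 - q * star b`. -/
noncomputable def moebiusDenom (b q : ℍ[ℝ]) : ℍ[ℝ] :=
  ((‖b‖ ^ 2 : ℝ) : ℍ[ℝ]) * q ^ 2 - ((2 * b.re : ℝ) : ℍ[ℝ]) * q + 1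

/-- The regular Moebius transformation vanishing at `b` (with unimodular constant `1`), that is,
the regular quotient of `q - b` by `1 - q * star b`. -/
noncomputable def regularMoebius (b q : ℍ[ℝ]) : ℍ[ℝ] :=
  (moebiusDenom b q)⁻¹ * (-(q ^ 2) * b + q * (1 + b ^ 2) - b)

variable {b q u s t g : ℍ[ℝ]}

theorem coe_two_mul_re (b : ℍ[ℝ]) : ((2 * b.re : ℝ) : ℍ[ℝ]) = star b + b := by
  rw [star_eq_two_re_sub, sub_add_cancel]

theorem star_mul_self_eq_coe_norm_sq (b : ℍ[ℝ]) : star b * b = ((‖b‖ ^ 2 : ℝ) : ℍ[ℝ]) := by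
  rw [star_mul_self, normSq_eq_norm_mul_self, sq]

theorem star_eq_inv_of_norm_eq_one (hu : ‖u‖ = 1) : star u = u⁻¹ := by
  refine eq_inv_of_mul_eq_one_left ?_
  rw [star_mul_self_eq_coe_norm_sq, hu, one_pow, coe_one]

theorem moebiusDenom_mul (b q g : ℍ[ℝ]) :
    moebiusDenom b q * g = (g - q * g * star b) - q * (g - q * g * star b) * b := by
  have hnorm : ((‖b‖ ^ 2 : ℝ) : ℍ[ℝ]) * q ^ 2 * g = q ^ 2 * g * (star b * b) := by
    rw [star_mul_self_eq_coe_norm_sq, mul_assoc, coe_commutes]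
  have htrace : ((2 * b.re : ℝ) : ℍ[ℝ]) * q * g = q * g * (star b + b) := by
    rw [← coe_two_mul_re, mul_assoc, coe_commutes]
  rw [moebiusDenom, add_mul, sub_mul, hnorm, htrace]
  noncomm_ring

theorem sub_mul_mul_ne_zero (hq : ‖q‖ < 1) (hb : ‖b‖ < 1) (hg : g ≠ 0) :
    g - q * g * b ≠ 0 := by
  refine sub_ne_zero.2 fun h => (lt_irrefl ‖g‖ ?_)
  calc ‖g‖ = ‖q‖ * ‖b‖ * ‖g‖ := by rw [mul_right_comm, ← norm_mul, ← norm_mul, ← h]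
    _ < ‖g‖ := mul_lt_of_lt_one_left (norm_pos_iff.2 hg)
      (mul_lt_one_of_nonneg_of_lt_one_left (norm_nonneg q) hq hb.le)

theorem moebiusDenom_ne_zero (hb : ‖b‖ < 1) (hq : ‖q‖ < 1) : moebiusDenom b q ≠ 0 := by
  rw [← mul_one (moebiusDenom b q), moebiusDenom_mul]
  exact sub_mul_mul_ne_zero hq hb
    (sub_mul_mul_ne_zero hq ((Quaternion.norm_star b).trans_lt hb) one_ne_zero)

theorem eq_regularMoebius_of_sub_mul_mul_star (hb : ‖b‖ < 1) (hq : ‖q‖ < 1)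
    (hg : g - q * g * star b = q - b) : g = regularMoebius b q := by
  rw [regularMoebius, eq_inv_mul_iff_mul_eq₀ (moebiusDenom_ne_zero hb hq), moebiusDenom_mul, hg]
  noncomm_ring

theorem mul_inv_star_mul_star_eq (hu : ‖u‖ = 1) (hs : s ≠ 0) (hst : Commute (star s) t) :
    s * (star s)⁻¹ * star u * star (u * star t * (star s)⁻¹ * star u) =
      t * (star s)⁻¹ * star u := by
  have hu0 : u ≠ 0 := norm_ne_zero_iff.1 (hu ▸ one_ne_zero)
  have hs_comm : Commute s (star s)⁻¹ := (star_comm_self (x := s)).symm.inv_right₀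
  calc s * (star s)⁻¹ * star u * star (u * star t * (star s)⁻¹ * star u)
      = s * (star s)⁻¹ * s⁻¹ * t * star u := by
        simp only [star_mul, star_star, star_inv₀, mul_assoc]
        rw [star_eq_inv_of_norm_eq_one hu, inv_mul_cancel_left₀ hu0]
    _ = t * (star s)⁻¹ * star u := by
        rw [hs_comm.eq, mul_inv_cancel_right₀ hs, hst.inv_left₀.eq]

theorem exists_eq_regularMoebius_mul_of_mul_add_mul (hu : ‖u‖ = 1) (hts : ‖t‖ < ‖s‖)
    (hst : Commute (star s) t) :
    ∃ b u' : ℍ[ℝ], ‖b‖ < 1 ∧ ‖u'‖ = 1 ∧ ∀ q g : ℍ[ℝ], ‖q‖ < 1 →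
      g * s + q * g * t = u * star t + q * u * star s → g = regularMoebius b q * u' := by
  have hs : s ≠ 0 := norm_pos_iff.1 ((norm_nonneg t).trans_lt hts)
  have hs' : star s ≠ 0 := star_ne_zero.2 hs
  have hu0 : u ≠ 0 := norm_ne_zero_iff.1 (hu ▸ one_ne_zero)
  have hstaru : star u = u⁻¹ := star_eq_inv_of_norm_eq_one hu
  have hb : ‖-(u * star t * (star s)⁻¹ * star u)‖ < 1 := by
    simpa [hu, ← div_eq_mul_inv] using (div_lt_one (norm_pos_iff.2 hs)).2 hts
  refine ⟨_, u * star s * s⁻¹, hb, by simp [hu, hs], fun q g hq hg => ?_⟩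
  suffices hG : g * s * (star s)⁻¹ * star u = regularMoebius _ q by
    rw [← hG, hstaru]
    simp only [mul_assoc, inv_mul_cancel_left₀ hu0, inv_mul_cancel_left₀ hs', mul_inv_cancel₀ hs,
      mul_one]
  refine eq_regularMoebius_of_sub_mul_mul_star hb hq ?_
  calc g * s * (star s)⁻¹ * star u - q * (g * s * (star s)⁻¹ * star u) *
        star (-(u * star t * (star s)⁻¹ * star u))
      = g * s * (star s)⁻¹ * star u + q * g *
          (s * (star s)⁻¹ * star u * star (u * star t * (star s)⁻¹ * star u)) := by
        rw [star_neg]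
        noncomm_ring
    _ = (g * s + q * g * t) * (star s)⁻¹ * star u := by
        rw [mul_inv_star_mul_star_eq hu hs hst]
        noncomm_ring
    _ = q - -(u * star t * (star s)⁻¹ * star u) := by
        rw [hg, hstaru]
        simp only [add_mul, mul_assoc, mul_inv_cancel_left₀ hs', mul_inv_cancel₀ hu0, mul_one]
        abel

theorem exists_eq_regularMoebius_mul {a : ℝ} {w : ℍ[ℝ]} (ha : |a| < 1) (hw : ‖w‖ < 1)
    (hu : ‖u‖ = 1) :
    ∃ b u' : ℍ[ℝ], ‖b‖ < 1 ∧ ‖u'‖ = 1 ∧ ∀ q g : ℍ[ℝ], ‖q‖ < 1 →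
      (q - a) * (1 - g * star w) * u = (1 - a * q) * (g - w) → g = regularMoebius b q * u' := by
  have hts : ‖star w * u - a‖ < ‖1 - star w * u * a‖ := by
    simpa using norm_sub_lt_norm_one_sub_mul_star (p := star w * u) (w := a)
      (by simpa [hu] using hw) (by simpa using ha)
  have hcoe (x : ℍ[ℝ]) : Commute x a := (coe_commute a x).symm
  have hst : Commute (star (1 - star w * u * a)) (star w * u - a) := by
    rw [star_sub, star_one, star_mul, star_coe]
    exact ((Commute.one_left _).sub_left
      ((hcoe _).symm.mul_left (star_comm_self.sub_right (hcoe _))))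
  obtain ⟨b, u', hb, hu', h⟩ := exists_eq_regularMoebius_mul_of_mul_add_mul hu hts hst
  refine ⟨b, u', hb, hu', fun q g hq hg => h q g hq ?_⟩
  have huu : u * star u = 1 := by
    rw [self_mul_star, normSq_eq_norm_mul_self, hu, mul_one, coe_one]
  have hstar_t : u * star (star w * u - a) = w - a * u := by
    rw [star_sub, star_mul, star_star, star_coe, mul_sub, ← mul_assoc, huu, one_mul, (hcoe u).eq]
  have hstar_s : u * star (1 - star w * u * a) = u - a * w := by
    simp only [star_sub, star_one, star_mul, star_star, star_coe, mul_sub, mul_one]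
    rw [← mul_assoc, (hcoe u).eq, mul_assoc, ← mul_assoc u, huu, one_mul]
  rw [hstar_t, mul_assoc q u, hstar_s, ← sub_eq_zero]
  calc g * (1 - star w * u * a) + q * g * (star w * u - a) - (w - a * u + q * (u - a * w))
      = g - g * star w * u * a + q * g * star w * u - q * g * a - w + a * u - q * u +
          q * a * w := by noncomm_ring
    _ = (1 - a * q) * (g - w) - (q - a) * (1 - g * star w) * u := by
        rw [(hcoe (g * star w * u)).eq, (hcoe (q * g)).eq, (hcoe q).eq]
        noncomm_ring
    _ = 0 := sub_eq_zero.2 hg.symm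

end RegularMoebius

/-- Every regular bijection of the unit ball `𝔹` onto itself is a regular Moebius
transformation: `f(q) = (1 − q·conj a)^{-*} * (q − a)·u`, given explicitly by
`f(q) = (|a|²q² − 2Re(a)q + 1)⁻¹ · (−q²a + q(1 + a²) − a) · u`. -/
theorem regular_bijection_is_moebius (f : ℍ[ℝ] → ℍ[ℝ]) (c : ℕ → ℍ[ℝ])
    (hf : ∀ q ∈ Metric.ball (0 : ℍ[ℝ]) 1, HasSum (fun n : ℕ => q ^ n * c n) (f q))
    (hbij : Set.BijOn f (Metric.ball 0 1) (Metric.ball 0 1)) :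
    ∃ a u : ℍ[ℝ], ‖a‖ < 1 ∧ ‖u‖ = 1 ∧
      ∀ q ∈ Metric.ball (0 : ℍ[ℝ]) 1,
        f q = (((‖a‖ ^ 2 : ℝ) : ℍ[ℝ]) * q ^ 2 - ((2 * a.re : ℝ) : ℍ[ℝ]) * q + 1)⁻¹ *
          (-(q ^ 2) * a + q * (1 + a ^ 2) - a) * u := by
  obtain ⟨a, w, u, ha, hw, hu, hfun⟩ :=
    HasRegularExpansion.exists_functional_equation (c := c) hf hbij
  obtain ⟨b, u', hb, hu', hmoebius⟩ := exists_eq_regularMoebius_mul ha hw hu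
  exact ⟨b, u', hb, hu', fun q hq => hmoebius q (f q) (mem_ball_zero_iff.1 hq) (hfun q hq)⟩
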